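/- arXiv:1207.2890 — 5 statements merged into one kernel-verified Lean document; each statement's English description precedes it below -/
import Mathlib

section
/- Let f : ℝ → ℂ be Lebesgue integrable on (-T, T) for every T > 0, and suppose that (1/T) ∫_{|t|<T} |t·f(t)| dt → 0 as T → ∞. Then uniformly in x ∈ ℝ one has lim_{h↓0} [ ∫_ℝ f(t) e^{itx} (sin(th)/(th)) dt − ∫_{|t|<1/h} f(t) e^{itx} dt ] = 0; that is, for every ε > 0 there exists h₀ > 0 such that for all 0 < h < h₀ and all x ∈ ℝ, |∫_ℝ f(t) e^{itx} (sin(th)/(th)) dt − ∫_{|t|<1/h} f(t) e^{itx} dt| < ε. -/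
/-!
The difference of the two integrals is the integral of `f(t) e^{itx}` against
`sin(th)/(th) - 1_{|t| < 1/h}`. This kernel is at most `|t|h` where `|t|h < 1` (Taylor) and at most
`1/(|t|h)` elsewhere, so a dyadic decomposition bounds it by
`∑ₖ (4/4ᵏ) |t|h 1_{|t|h < 2ᵏ}` (`exists_kernel_bound`).
Once `T₀ ≤ 1/h`, where `∫_{|t|<T} |t f(t)| dt ≤ δT` for all `T ≥ T₀`, integrating termwise gives
`∑ₖ (4/4ᵏ) h · δ 2ᵏ/h = 8δ`, which does not depend on `x` (`lintegral_difference_le`). The same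
estimate shows that the integral over `ℝ` converges absolutely.
-/

open MeasureTheory Filter Set

/-- The kernel `sin(t h)/(t h)`, understood to equal `1` at `t = 0`. -/
noncomputable def sincKernel (h t : ℝ) : ℝ :=
  if t = 0 then 1 else Real.sin (t * h) / (t * h)

lemma abs_sin_div_sub_one_le {u : ℝ} (hu : u ≠ 0) (h1 : |u| ≤ 1) :
    |Real.sin u / u - 1| ≤ |u| := by
  wlog hpos : 0 < u generalizing u
  · have := this (u := -u) (by simpa using hu) (by simpa using h1)
      (by have := lt_of_le_of_ne (not_lt.1 hpos) hu; linarith)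
    simpa [Real.sin_neg, neg_div_neg_eq] using this
  rw [abs_of_pos hpos] at h1 ⊢
  have hl := Real.sin_gt_sub_cube hpos
  have hr := Real.sin_lt hpos
  have e : Real.sin u / u - 1 = (Real.sin u - u) / u := by field_simp
  rw [e, abs_div, abs_of_pos hpos, div_le_iff₀ hpos, abs_of_neg (by linarith)]
  nlinarith [pow_le_pow_of_le_one hpos.le h1 (show 2 ≤ 3 by norm_num), mul_pos hpos hpos]

/-- Each `t` lies in a dyadic block, indexed by `k`, on which the kernel is at most
`4 / 4 ^ k * (|t| * h)`. -/
lemma exists_kernel_bound {h : ℝ} (hh : 0 < h) (t : ℝ) :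
    ∃ k : ℕ, |t| * h < 2 ^ k ∧
      |sincKernel h t - (if |t| * h < 1 then 1 else 0)| ≤ 4 / 4 ^ k * (|t| * h) := by
  have habs : |t * h| = |t| * h := by rw [abs_mul, abs_of_pos hh]
  by_cases h1 : |t| * h < 1
  · refine ⟨0, by simpa using h1, ?_⟩
    rw [if_pos h1]
    by_cases ht : t = 0
    · simp [sincKernel, ht]
    · rw [sincKernel, if_neg ht]
      have := abs_sin_div_sub_one_le (mul_ne_zero ht hh.ne') (by rw [habs]; exact h1.le)
      rw [habs] at this
      have : 0 ≤ |t| * h := by positivity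
      norm_num
      linarith
  · have h1' := not_lt.1 h1
    have ht : t ≠ 0 := by rintro rfl; norm_num at h1
    obtain ⟨n, hn, hn'⟩ := exists_nat_pow_near h1' (one_lt_two : (1 : ℝ) < 2)
    refine ⟨n + 1, hn', ?_⟩
    rw [if_neg h1, sincKernel, if_neg ht, sub_zero, abs_div, habs]
    have hpos : 0 < |t| * h := by linarith
    have e : (4 : ℝ) / 4 ^ (n + 1) = 1 / (2 ^ n * 2 ^ n) := by
      rw [pow_succ, ← mul_pow]; norm_num; field_simp
    rw [e, div_le_iff₀ hpos]
    have hp : (0 : ℝ) < 2 ^ n := by positivity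
    calc |Real.sin (t * h)| ≤ 1 := Real.abs_sin_le_one _
      _ ≤ (|t| * h * (|t| * h)) / (2 ^ n * 2 ^ n) := by
          rw [le_div_iff₀ (by positivity), one_mul]
          exact mul_le_mul hn hn hp.le hpos.le
      _ = _ := by ring

/-- The difference of the two integrands. -/
noncomputable def difference (f : ℝ → ℂ) (h x t : ℝ) : ℂ :=
  f t * Complex.exp (Complex.I * t * x) * sincKernel h t -
    (Ioo (-(1 / h)) (1 / h)).indicator (fun t : ℝ => f t * Complex.exp (Complex.I * t * x)) t

lemma mem_Ioo_neg_iff {h : ℝ} (hh : 0 < h) (a t : ℝ) :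
    t ∈ Ioo (-(a / h)) (a / h) ↔ |t| * h < a := by
  rw [mem_Ioo, ← abs_lt, lt_div_iff₀ hh]

lemma norm_exp_I_mul (t x : ℝ) : ‖Complex.exp (Complex.I * t * x)‖ = 1 := by
  have : Complex.I * t * x = ((t * x : ℝ) : ℂ) * Complex.I := by push_cast; ring
  rw [this, Complex.norm_exp_ofReal_mul_I]

lemma norm_difference (f : ℝ → ℂ) {h : ℝ} (hh : 0 < h) (x t : ℝ) :
    ‖difference f h x t‖ = ‖f t‖ * |sincKernel h t - (if |t| * h < 1 then 1 else 0)| := by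
  have : difference f h x t = f t * Complex.exp (Complex.I * t * x) *
      ((sincKernel h t - (if |t| * h < 1 then 1 else 0) : ℝ) : ℂ) := by
    simp only [difference, indicator, mem_Ioo_neg_iff hh]
    split_ifs <;> push_cast <;> ring
  rw [this, norm_mul, norm_mul, norm_exp_I_mul, mul_one, Complex.norm_real, Real.norm_eq_abs]

lemma enorm_difference_le (f : ℝ → ℂ) {h : ℝ} (hh : 0 < h) (x t : ℝ) :
    ‖difference f h x t‖ₑ ≤ ∑' k : ℕ, (Ioo (-(2 ^ k / h)) (2 ^ k / h)).indicator
      (fun t : ℝ => ENNReal.ofReal (4 / 4 ^ k * h) * ‖(t : ℂ) * f t‖ₑ) t := by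
  obtain ⟨k, hk, hb⟩ := exists_kernel_bound hh t
  refine le_trans ?_ (ENNReal.le_tsum k)
  rw [indicator_of_mem ((mem_Ioo_neg_iff hh _ _).2 hk), ← ofReal_norm, ← ofReal_norm,
    ← ENNReal.ofReal_mul (by positivity), norm_difference f hh]
  refine ENNReal.ofReal_le_ofReal ?_
  rw [norm_mul, Complex.norm_real, Real.norm_eq_abs]
  calc _ ≤ ‖f t‖ * (4 / 4 ^ k * (|t| * h)) := by gcongr
    _ = _ := by ring

lemma integrableOn_id_mul {f : ℝ → ℂ} {T : ℝ} (hf : IntegrableOn f (Ioo (-T) T)) :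
    IntegrableOn (fun t : ℝ => (t : ℂ) * f t) (Ioo (-T) T) := by
  refine Integrable.bdd_mul (c := T) hf (by fun_prop) ?_
  filter_upwards [ae_restrict_mem measurableSet_Ioo] with t ht
  rw [Complex.norm_real, Real.norm_eq_abs]
  exact (abs_lt.2 ht).le

/-- The bound `8δ` is uniform in `x`. -/
lemma lintegral_difference_le {f : ℝ → ℂ} (hf : ∀ T > (0 : ℝ), IntegrableOn f (Ioo (-T) T))
    (hfm : AEStronglyMeasurable f) {δ T₀ h : ℝ} (hδ : 0 ≤ δ) (hh : 0 < h) (hT : T₀ ≤ 1 / h)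
    (hG : ∀ T ≥ T₀, ∫ t in Ioo (-T) T, ‖(t : ℂ) * f t‖ ≤ δ * T) (x : ℝ) :
    ∫⁻ t, ‖difference f h x t‖ₑ ≤ ENNReal.ofReal (8 * δ) := by
  have hm : AEStronglyMeasurable (fun t : ℝ => (t : ℂ) * f t) := by
    exact AEStronglyMeasurable.mul (by fun_prop) hfm
  have hsum : HasSum (fun k : ℕ => 4 * δ * (1 / 2 : ℝ) ^ k) (8 * δ) := by
    have e : 8 * δ = 4 * δ * 2 := by ring
    rw [e]
    exact hasSum_geometric_two.mul_left (4 * δ)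
  calc ∫⁻ t, ‖difference f h x t‖ₑ
      ≤ ∫⁻ t, ∑' k : ℕ, (Ioo (-(2 ^ k / h)) (2 ^ k / h)).indicator
          (fun t : ℝ => ENNReal.ofReal (4 / 4 ^ k * h) * ‖(t : ℂ) * f t‖ₑ) t :=
        lintegral_mono (enorm_difference_le f hh x)
    _ = ∑' k : ℕ, ∫⁻ t, (Ioo (-(2 ^ k / h)) (2 ^ k / h)).indicator
          (fun t : ℝ => ENNReal.ofReal (4 / 4 ^ k * h) * ‖(t : ℂ) * f t‖ₑ) t :=
        lintegral_tsum fun k => (hm.enorm.const_mul _).indicator measurableSet_Ioo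
    _ ≤ ∑' k : ℕ, ENNReal.ofReal (4 * δ * (1 / 2 : ℝ) ^ k) := by
        refine ENNReal.tsum_le_tsum fun k => ?_
        have hk : T₀ ≤ 2 ^ k / h := hT.trans (by gcongr; exact one_le_pow₀ one_le_two)
        rw [lintegral_indicator measurableSet_Ioo,
          lintegral_const_mul' _ _ ENNReal.ofReal_ne_top,
          ← ofReal_integral_norm_eq_lintegral_enorm
            (integrableOn_id_mul (hf (2 ^ k / h) (by positivity))),
          ← ENNReal.ofReal_mul (by positivity)]
        refine ENNReal.ofReal_le_ofReal ?_
        calc _ ≤ 4 / 4 ^ k * h * (δ * (2 ^ k / h)) := by gcongr; exact hG _ hk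
          _ = _ := by
            have : (4 : ℝ) ^ k = 2 ^ k * 2 ^ k := by rw [← mul_pow]; norm_num
            rw [this, one_div, inv_pow]
            field_simp
    _ = ENNReal.ofReal (8 * δ) := by
        rw [← ENNReal.ofReal_tsum_of_nonneg (fun k => by positivity) hsum.summable,
          hsum.tsum_eq]

lemma measurable_sincKernel (h : ℝ) : Measurable (sincKernel h) := by
  unfold sincKernel
  exact Measurable.ite (measurableSet_singleton 0) measurable_const (by fun_prop)

/-- Theorem 2′: if `f` is Lebesgue integrable on `(-T, T)` for every `T > 0` and
`(1/T) ∫_{|t|<T} |t f(t)| dt → 0` as `T → ∞`, then uniformly in `x`,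
`Δ𝓛(x;h)/(2h) − I_{1/h}(x) → 0` as `h ↓ 0`. -/
theorem theorem2'
    (f : ℝ → ℂ)
    (hloc : ∀ T > (0 : ℝ), IntegrableOn f (Ioo (-T) T))
    (hmean : Tendsto (fun T : ℝ => (1 / T) * ∫ t in Ioo (-T) T, ‖(t : ℂ) * f t‖)
      atTop (nhds 0)) :
    ∀ ε > (0 : ℝ), ∃ h₀ > (0 : ℝ), ∀ h : ℝ, 0 < h → h < h₀ → ∀ x : ℝ,
      ‖(∫ t : ℝ, f t * Complex.exp (Complex.I * t * x) * sincKernel h t) -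
        ∫ t in Ioo (-(1 / h)) (1 / h), f t * Complex.exp (Complex.I * t * x)‖ < ε := by
  intro ε hε
  have hfm : AEStronglyMeasurable f := by
    have : LocallyIntegrable f := fun x =>
      ⟨Ioo (-(|x| + 1)) (|x| + 1), Ioo_mem_nhds (by linarith [neg_abs_le x])
        (by linarith [le_abs_self x]), hloc _ (by positivity)⟩
    exact this.aestronglyMeasurable
  obtain ⟨T₁, hT₁⟩ := eventually_atTop.1 (hmean.eventually_lt_const (show 0 < ε / 16 by positivity))
  have hG : ∀ T ≥ max T₁ 1, ∫ t in Ioo (-T) T, ‖(t : ℂ) * f t‖ ≤ ε / 16 * T := by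
    intro T hT
    have hT0 : 0 < T := lt_of_lt_of_le one_pos ((le_max_right _ _).trans hT)
    have := hT₁ T ((le_max_left _ _).trans hT)
    rw [one_div, inv_mul_eq_div, div_lt_iff₀ hT0] at this
    exact this.le
  have hM : 0 < max T₁ 1 := lt_of_lt_of_le one_pos (le_max_right _ _)
  refine ⟨1 / max T₁ 1, by positivity, fun h hh hlt x => ?_⟩
  have hT : max T₁ 1 ≤ 1 / h := by
    rw [le_div_iff₀ hh, mul_comm]
    exact ((lt_div_iff₀ hM).1 hlt).le
  have hle := lintegral_difference_le hloc hfm (by positivity) hh hT hG x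
  have hem : AEStronglyMeasurable (fun t : ℝ => f t * Complex.exp (Complex.I * t * x)) :=
    hfm.mul (Continuous.aestronglyMeasurable (by fun_prop))
  have hint1 : IntegrableOn (fun t : ℝ => f t * Complex.exp (Complex.I * t * x))
      (Ioo (-(1 / h)) (1 / h)) :=
    Integrable.mono (hloc (1 / h) (by positivity)) hem.restrict
      (Eventually.of_forall fun t => by rw [norm_mul, norm_exp_I_mul, mul_one])
  have hint2 : Integrable (difference f h x) := by
    refine ⟨?_, hle.trans_lt ENNReal.ofReal_lt_top⟩
    refine (hem.mul ?_).sub (hem.indicator measurableSet_Ioo)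
    exact (Complex.measurable_ofReal.comp (measurable_sincKernel h)).aestronglyMeasurable
  have hint1' := hint1.integrable_indicator measurableSet_Ioo
  have hint3 : Integrable
      (fun t : ℝ => f t * Complex.exp (Complex.I * t * x) * sincKernel h t) := by
    refine (hint2.add hint1').congr (Eventually.of_forall fun t => ?_)
    simp [difference]
  rw [← integral_indicator measurableSet_Ioo, ← integral_sub hint3 hint1']
  calc ‖∫ t, difference f h x t‖ ≤ ∫ t, ‖difference f h x t‖ := norm_integral_le_integral_norm _
    _ ≤ 8 * (ε / 16) := by
        rw [← ENNReal.ofReal_le_ofReal_iff (by positivity),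
          ofReal_integral_norm_eq_lintegral_enorm hint2]
        exact hle
    _ < ε := by linarith
end

section
/- Let f : ℝ → ℂ be Lebesgue integrable on (-T, T) for every T > 0, and suppose there exist constants B ≥ 0 and T₁ > 0 such that (1/T) ∫_{|t|<T} |t·f(t)| dt ≤ B for all T > T₁. If at some point x ∈ ℝ the finite limit lim_{T→∞} ∫_{|t|<T} f(t) e^{itx} dt = ℓ exists, then at this x one has lim_{h↓0} [ ∫_ℝ f(t) e^{itx} (sin(th)/(th)) dt − ∫_{|t|<1/h} f(t) e^{itx} dt ] = 0. -/
/-!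
Write `g(t) = f(t) e^{itx}`, so that `|g| = |f|`, and let `I_T = ∫_{|t|<T} g → ℓ`. It suffices to
show that the smoothed integrals `∫ g(t) sinc(th) dt` also tend to `ℓ` as `h ↓ 0`.

Fix `N > 0` and cut the smoothed integral at `|t| = N / h`. The outer part is at most
`h⁻¹ ∫_{|t| ≥ N/h} |f(t)| / |t| dt`, and the mean bound on `|t f(t)|` makes this at most `2B / N`,
uniformly in `h` (`lintegral_tail_le`, `norm_integral_sub_setIntegral_le`). In the inner part,
Fubini's theorem applied to `sinc(th) = sinc N - ∫_{|t|h}^N sinc'(v) dv` gives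
`sinc(N) I_{N/h} - ∫_0^N sinc'(v) I_{v/h} dv` (`setIntegral_mul_comp_abs`), which tends to
`sinc(N) ℓ - (sinc N - sinc 0) ℓ = ℓ` by dominated convergence
(`tendsto_setIntegral_mul_comp_abs`). Letting `N → ∞` finishes the proof. The cut is needed because
`sinc'` is not absolutely integrable on `(0, ∞)`.
-/

open MeasureTheory Filter Set

/-! ### The kernel -/

/-- `sinc` is the restriction to `ℝ` of the entire function `dslope sin 0`. -/
theorem contDiff_sinc : ContDiff ℝ 1 Real.sinc := by
  have hd : Differentiable ℂ (dslope Complex.sin 0) := by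
    rw [← differentiableOn_univ]
    exact (Complex.differentiableOn_dslope Filter.univ_mem).2
      Complex.differentiable_sin.differentiableOn
  have he : Real.sinc = fun s : ℝ => (dslope Complex.sin 0 (s : ℂ)).re := by
    funext s
    by_cases hs : s = 0
    · simp [hs]
    · rw [Real.sinc_of_ne_zero hs, dslope_of_ne _ (by exact_mod_cast hs), slope_def_field]
      simp only [sub_zero, Complex.sin_zero]
      rw [← Complex.ofReal_sin, ← Complex.ofReal_div, Complex.ofReal_re]
  rw [he]
  exact hd.contDiff.real_of_complex

theorem sincKernel_eq_sinc {h : ℝ} (hh : 0 < h) (t : ℝ) : sincKernel h t = Real.sinc (|t| * h) := by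
  have : Real.sinc (|t| * h) = Real.sinc (t * h) := by
    rcases abs_choice t with ht | ht <;> rw [ht]
    rw [neg_mul, Real.sinc_neg]
  rw [this]
  unfold sincKernel Real.sinc
  simp [hh.ne']

theorem abs_sincKernel_le {h : ℝ} (hh : 0 < h) {t : ℝ} (ht : t ≠ 0) :
    |sincKernel h t| ≤ (1 / h) * (1 / |t|) := by
  unfold sincKernel
  rw [if_neg ht, abs_div, abs_mul, abs_of_pos hh]
  have : 0 < |t| := abs_pos.2 ht
  calc _ ≤ 1 / (|t| * h) := by gcongr; exact Real.abs_sin_le_one _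
    _ = _ := by field_simp

/-! ### Tails of `f(t) / t` -/

theorem lintegral_Ioi_two_div_cube {a : ℝ} (ha : 0 < a) :
    ∫⁻ u in Ioi a, ENNReal.ofReal (2 / u ^ 3) = ENNReal.ofReal (1 / a ^ 2) := by
  have hd : ∀ u ∈ Ici a, HasDerivAt (fun u : ℝ => -(u ^ 2)⁻¹) (2 / u ^ 3) u := by
    intro u hu
    have hu0 : u ≠ 0 := (ha.trans_le hu).ne'
    refine ((hasDerivAt_pow 2 u).inv (pow_ne_zero 2 hu0)).neg.congr_deriv ?_
    field_simp
    norm_num [mul_comm]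
  have hp : ∀ u ∈ Ioi a, 0 ≤ 2 / u ^ 3 := fun u hu => by
    have : 0 < u := ha.trans hu
    positivity
  have hl : Tendsto (fun u : ℝ => -(u ^ 2)⁻¹) atTop (nhds 0) := by
    simpa using (tendsto_pow_atTop (α := ℝ) two_ne_zero).inv_tendsto_atTop.neg
  have hi := integrableOn_Ioi_deriv_of_nonneg' hd hp hl
  rw [← ofReal_integral_eq_lintegral_ofReal hi
    ((ae_restrict_iff' measurableSet_Ioi).2 (Eventually.of_forall hp)),
    integral_Ioi_of_hasDerivAt_of_nonneg' hd hp hl]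
  simp

theorem lintegral_Ioi_div_sq {a c : ℝ} (ha : 0 < a) (hc : 0 ≤ c) :
    ∫⁻ u in Ioi a, ENNReal.ofReal (c / u ^ 2) = ENNReal.ofReal (c / a) := by
  have hd : ∀ u ∈ Ici a, HasDerivAt (fun u : ℝ => -(c * u⁻¹)) (c / u ^ 2) u := by
    intro u hu
    have hu0 : u ≠ 0 := (ha.trans_le hu).ne'
    refine ((hasDerivAt_inv hu0).const_mul c).neg.congr_deriv ?_
    field_simp
  have hp : ∀ u ∈ Ioi a, 0 ≤ c / u ^ 2 := fun u hu => by positivity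
  have hl : Tendsto (fun u : ℝ => -(c * u⁻¹)) atTop (nhds 0) := by
    simpa using (tendsto_inv_atTop_zero (𝕜 := ℝ)).const_mul c |>.neg
  have hi := integrableOn_Ioi_deriv_of_nonneg' hd hp hl
  rw [← ofReal_integral_eq_lintegral_ofReal hi
    ((ae_restrict_iff' measurableSet_Ioi).2 (Eventually.of_forall hp)),
    integral_Ioi_of_hasDerivAt_of_nonneg' hd hp hl]
  simp [div_eq_mul_inv]

theorem aestronglyMeasurable_of_integrableOn_Ioo {f : ℝ → ℂ}
    (hloc : ∀ T > (0 : ℝ), IntegrableOn f (Ioo (-T) T)) : AEStronglyMeasurable f := by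
  have hU : (⋃ n : ℕ, Ioo (-((n : ℝ) + 1)) ((n : ℝ) + 1)) = univ := by
    refine eq_univ_of_forall fun t => mem_iUnion.2 ?_
    obtain ⟨n, hn⟩ := exists_nat_gt |t|
    obtain ⟨h1, h2⟩ := abs_lt.1 hn
    exact ⟨n, by linarith, by linarith⟩
  rw [← Measure.restrict_univ (μ := (volume : Measure ℝ)), ← hU, aestronglyMeasurable_iUnion_iff]
  exact fun n => (hloc _ (by positivity)).aestronglyMeasurable

/-- The mean bound on `|t f(t)|` controls the tails of `f(t) / t`: since
`1 / |t|² = ∫_{|t|}^∞ 2 u⁻³ du`, Tonelli's theorem bounds the tail by `∫_A^∞ 2 u⁻³ (B u) du`. -/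
theorem lintegral_tail_le {f : ℝ → ℂ}
    (hloc : ∀ T > (0 : ℝ), IntegrableOn f (Ioo (-T) T))
    {B : ℝ} (hB : 0 ≤ B) {T₁ : ℝ}
    (hbound : ∀ T > T₁, (1 / T) * ∫ t in Ioo (-T) T, ‖(t : ℂ) * f t‖ ≤ B)
    {A : ℝ} (hA : 0 < A) (hAT : T₁ < A) :
    ∫⁻ t in {t : ℝ | A ≤ |t|}, ENNReal.ofReal (‖f t‖ * (1 / |t|)) ≤ ENNReal.ofReal (2 * B / A) := by
  have hfm := aestronglyMeasurable_of_integrableOn_Ioo hloc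
  have hS : MeasurableSet {t : ℝ | A ≤ |t|} := measurableSet_le measurable_const (by fun_prop)
  have htf : AEMeasurable (fun t : ℝ => ENNReal.ofReal ‖(t : ℂ) * f t‖) :=
    ((Complex.continuous_ofReal.aestronglyMeasurable.mul hfm).norm.aemeasurable).ennreal_ofReal
  set F : ℝ → ℝ → ENNReal := fun t u =>
    {p : ℝ × ℝ | |p.1| < p.2}.indicator
      (fun p => ENNReal.ofReal ‖(p.1 : ℂ) * f p.1‖ * ENNReal.ofReal (2 / p.2 ^ 3)) (t, u) with hF
  have hD : MeasurableSet {p : ℝ × ℝ | |p.1| < p.2} := measurableSet_lt (by fun_prop) (by fun_prop)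
  have hFm : AEMeasurable (Function.uncurry F)
      ((volume.restrict {t : ℝ | A ≤ |t|}).prod (volume.restrict (Ioi A))) := by
    have h1 : AEMeasurable (fun p : ℝ × ℝ => ENNReal.ofReal ‖(p.1 : ℂ) * f p.1‖)
        ((volume.restrict {t : ℝ | A ≤ |t|}).prod (volume.restrict (Ioi A))) :=
      htf.restrict.comp_fst
    have h2 : Measurable fun p : ℝ × ℝ => ENNReal.ofReal (2 / p.2 ^ 3) := by fun_prop
    exact (h1.mul h2.aemeasurable).indicator hD
  have h1 : ∀ t ∈ {t : ℝ | A ≤ |t|},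
      ENNReal.ofReal (‖f t‖ * (1 / |t|)) = ∫⁻ u in Ioi A, F t u := by
    intro t ht
    have ht0 : 0 < |t| := hA.trans_le ht
    have e1 : ∀ u, F t u = (Ioi |t|).indicator
        (fun u => ENNReal.ofReal ‖(t : ℂ) * f t‖ * ENNReal.ofReal (2 / u ^ 3)) u := by
      intro u; simp [hF, indicator]
    simp_rw [e1]
    rw [lintegral_indicator measurableSet_Ioi, Measure.restrict_restrict measurableSet_Ioi,
      inter_eq_left.2 (Ioi_subset_Ioi ht), lintegral_const_mul' _ _ ENNReal.ofReal_ne_top,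
      lintegral_Ioi_two_div_cube ht0, ← ENNReal.ofReal_mul (norm_nonneg _), norm_mul,
      Complex.norm_real, Real.norm_eq_abs]
    congr 1
    field_simp
  have h2 : ∀ u ∈ Ioi A, ∫⁻ t in {t : ℝ | A ≤ |t|}, F t u ≤ ENNReal.ofReal (2 * B / u ^ 2) := by
    intro u hu
    have hu0 : 0 < u := hA.trans hu
    have e1 : ∀ t, F t u = (Ioo (-u) u).indicator
        (fun t => ENNReal.ofReal ‖(t : ℂ) * f t‖ * ENNReal.ofReal (2 / u ^ 3)) t := by
      intro t; simp [hF, indicator, abs_lt]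
    have hi : IntegrableOn (fun t : ℝ => (t : ℂ) * f t) (Ioo (-u) u) := by
      refine Integrable.bdd_mul (c := u) (hloc u hu0)
        Complex.continuous_ofReal.aestronglyMeasurable ?_
      refine (ae_restrict_iff' measurableSet_Ioo).2 (Eventually.of_forall fun t ht => ?_)
      rw [Complex.norm_real, Real.norm_eq_abs]
      exact (abs_lt.2 ht).le
    have hb := hbound u (hAT.trans hu)
    calc ∫⁻ t in {t : ℝ | A ≤ |t|}, F t u ≤ ∫⁻ t, F t u := setLIntegral_le_lintegral _ _
      _ = ENNReal.ofReal (∫ t in Ioo (-u) u, ‖(t : ℂ) * f t‖) * ENNReal.ofReal (2 / u ^ 3) := by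
        simp_rw [e1]
        rw [lintegral_indicator measurableSet_Ioo, lintegral_mul_const' _ _ ENNReal.ofReal_ne_top,
          ofReal_integral_eq_lintegral_ofReal hi.norm
            (Eventually.of_forall fun t => norm_nonneg _)]
      _ = ENNReal.ofReal ((1 / u * ∫ t in Ioo (-u) u, ‖(t : ℂ) * f t‖) * (2 / u ^ 2)) := by
        rw [← ENNReal.ofReal_mul (integral_nonneg fun _ => norm_nonneg _)]
        congr 1
        field_simp
      _ ≤ ENNReal.ofReal (B * (2 / u ^ 2)) := by gcongr
      _ = _ := by congr 1; ring
  calc _ = ∫⁻ t in {t : ℝ | A ≤ |t|}, ∫⁻ u in Ioi A, F t u := setLIntegral_congr_fun hS h1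
    _ = ∫⁻ u in Ioi A, ∫⁻ t in {t : ℝ | A ≤ |t|}, F t u := lintegral_lintegral_swap hFm
    _ ≤ ∫⁻ u in Ioi A, ENNReal.ofReal (2 * B / u ^ 2) := setLIntegral_mono' measurableSet_Ioi h2
    _ = _ := lintegral_Ioi_div_sq hA (by positivity)

/-! ### The truncated smoothed integral -/

/-- Integration by parts against `T ↦ ∫_{|t|<T} g`, obtained from Fubini's theorem on the region
`|t| h < v < N` and `φ (|t| h) = φ N - ∫_{|t| h}^N φ'(v) dv`. -/
theorem setIntegral_mul_comp_abs {g : ℝ → ℂ}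
    (hg : ∀ T > (0 : ℝ), IntegrableOn g (Ioo (-T) T))
    {φ : ℝ → ℝ} (hφ : ContDiff ℝ 1 φ) {N h : ℝ} (hN : 0 < N) (hh : 0 < h) :
    IntegrableOn (fun v => ((deriv φ v : ℝ) : ℂ) * ∫ t in Ioo (-(v / h)) (v / h), g t) (Ioo 0 N) ∧
    ∫ t in Ioo (-(N / h)) (N / h), g t * φ (|t| * h) =
      φ N * (∫ t in Ioo (-(N / h)) (N / h), g t) -
        ∫ v in Ioo 0 N, ((deriv φ v : ℝ) : ℂ) * ∫ t in Ioo (-(v / h)) (v / h), g t := by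
  have hA : 0 < N / h := by positivity
  have hc : Continuous (deriv φ) := hφ.continuous_deriv le_rfl
  have hcC : Continuous fun v => ((deriv φ v : ℝ) : ℂ) := Complex.continuous_ofReal.comp hc
  set D : Set (ℝ × ℝ) := {p | |p.1| * h < p.2} with hD
  have hDm : MeasurableSet D := measurableSet_lt (by fun_prop) (by fun_prop)
  have hdi : IntegrableOn (fun v => ((deriv φ v : ℝ) : ℂ)) (Ioo 0 N) :=
    (hcC.integrableOn_Icc (a := 0) (b := N)).mono_set Ioo_subset_Icc_self
  have hint : Integrable (Function.uncurry fun t v => D.indicator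
      (fun p => g p.1 * ((deriv φ p.2 : ℝ) : ℂ)) (t, v))
      ((volume.restrict (Ioo (-(N / h)) (N / h))).prod (volume.restrict (Ioo 0 N))) :=
    ((hg _ hA).mul_prod hdi).indicator hDm
  have hslice : ∀ t ∈ Ioo (-(N / h)) (N / h),
      ∫ v in Ioo 0 N, D.indicator (fun p => g p.1 * ((deriv φ p.2 : ℝ) : ℂ)) (t, v)
        = g t * φ N - g t * φ (|t| * h) := by
    intro t ht
    have htN : |t| * h < N := (lt_div_iff₀ hh).1 (abs_lt.2 ht)
    have ht0 : 0 ≤ |t| * h := by positivity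
    have e1 : ∀ v, D.indicator (fun p => g p.1 * ((deriv φ p.2 : ℝ) : ℂ)) (t, v)
        = (Ioi (|t| * h)).indicator (fun v => g t * ((deriv φ v : ℝ) : ℂ)) v := by
      intro v; simp [hD, indicator]
    simp_rw [e1]
    rw [setIntegral_indicator measurableSet_Ioi]
    have e2 : Ioo 0 N ∩ Ioi (|t| * h) = Ioo (|t| * h) N := by
      ext v; simp only [mem_inter_iff, mem_Ioo, mem_Ioi]
      exact ⟨fun hv => ⟨hv.2, hv.1.2⟩, fun hv => ⟨⟨ht0.trans_lt hv.1, hv.2⟩, hv.1⟩⟩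
    rw [e2, ← integral_Ioc_eq_integral_Ioo, ← intervalIntegral.integral_of_le htN.le,
      intervalIntegral.integral_const_mul, intervalIntegral.integral_ofReal,
      intervalIntegral.integral_deriv_eq_sub
        (fun v _ => (hφ.differentiable one_ne_zero) v) (hc.intervalIntegrable _ _)]
    push_cast; ring
  have hslice' : ∀ v ∈ Ioo 0 N,
      ∫ t in Ioo (-(N / h)) (N / h), D.indicator (fun p => g p.1 * ((deriv φ p.2 : ℝ) : ℂ)) (t, v)
        = ((deriv φ v : ℝ) : ℂ) * ∫ t in Ioo (-(v / h)) (v / h), g t := by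
    intro v hv
    have hvN : v / h ≤ N / h := by gcongr; exact hv.2.le
    have e1 : ∀ t, D.indicator (fun p => g p.1 * ((deriv φ p.2 : ℝ) : ℂ)) (t, v)
        = (Ioo (-(v / h)) (v / h)).indicator (fun t => g t * ((deriv φ v : ℝ) : ℂ)) t := by
      intro t; simp [hD, indicator, ← lt_div_iff₀ hh, abs_lt]
    simp_rw [e1]
    rw [setIntegral_indicator measurableSet_Ioo,
      inter_eq_right.2 (Ioo_subset_Ioo (neg_le_neg hvN) hvN), integral_mul_const, mul_comm]
  have hright := hint.integral_prod_right
  have hleft := hint.integral_prod_left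
  refine ⟨?_, ?_⟩
  · exact IntegrableOn.congr_fun (s := Ioo 0 N) hright hslice' measurableSet_Ioo
  · rw [← setIntegral_congr_fun measurableSet_Ioo hslice', ← integral_integral_swap hint,
      setIntegral_congr_fun measurableSet_Ioo hslice, integral_sub, integral_mul_const]
    · ring
    · exact (hg _ hA).mul_const _
    · have : IntegrableOn (fun t => g t * φ N - (g t * φ N - g t * φ (|t| * h)))
          (Ioo (-(N / h)) (N / h)) :=
        ((hg _ hA).mul_const _).sub
          (IntegrableOn.congr_fun (s := Ioo (-(N / h)) (N / h)) hleft hslice measurableSet_Ioo)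
      simpa [IntegrableOn] using this

/-- An Abelian statement for truncated kernels: dominated convergence in the layer-cake identity
shows that smoothing by `φ` on `|t| h < N` reproduces the limit `ℓ`, up to the factor `φ 0`. -/
theorem tendsto_setIntegral_mul_comp_abs {g : ℝ → ℂ}
    (hg : ∀ T > (0 : ℝ), IntegrableOn g (Ioo (-T) T)) {ℓ : ℂ}
    (hconv : Tendsto (fun T : ℝ => ∫ t in Ioo (-T) T, g t) atTop (nhds ℓ))
    {φ : ℝ → ℝ} (hφ : ContDiff ℝ 1 φ) {N : ℝ} (hN : 0 < N) :
    Tendsto (fun h : ℝ => ∫ t in Ioo (-(N / h)) (N / h), g t * φ (|t| * h))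
      (nhdsWithin 0 (Ioi 0)) (nhds (φ 0 * ℓ)) := by
  have hc : Continuous (deriv φ) := hφ.continuous_deriv le_rfl
  have hcC : Continuous fun v => ((deriv φ v : ℝ) : ℂ) := Complex.continuous_ofReal.comp hc
  have hdi : IntegrableOn (fun v => ((deriv φ v : ℝ) : ℂ)) (Ioo 0 N) :=
    (hcC.integrableOn_Icc (a := 0) (b := N)).mono_set Ioo_subset_Icc_self
  have hdiv : ∀ v > 0, Tendsto (fun h : ℝ => v / h) (nhdsWithin 0 (Ioi 0)) atTop := fun v hv =>
    tendsto_inv_nhdsGT_zero.const_mul_atTop hv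
  -- The symmetric partial integrals are bounded: near infinity by convergence, elsewhere by
  -- local integrability.
  obtain ⟨M, hM⟩ : ∃ M, ∀ T : ℝ, ‖∫ t in Ioo (-T) T, g t‖ ≤ M := by
    obtain ⟨T₀, hT₀⟩ := eventually_atTop.1
      ((hconv.norm.eventually (gt_mem_nhds (lt_add_one ‖ℓ‖))).and (eventually_gt_atTop 0))
    refine ⟨max (‖ℓ‖ + 1) (∫ t in Ioo (-T₀) T₀, ‖g t‖), fun T => ?_⟩
    rcases le_total T₀ T with hT | hT
    · exact (hT₀ T hT).1.le.trans (le_max_left _ _)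
    · refine (norm_integral_le_integral_norm _).trans (le_trans ?_ (le_max_right _ _))
      exact setIntegral_mono_set (hg T₀ (hT₀ T₀ le_rfl).2).norm
        (Eventually.of_forall fun _ => norm_nonneg _)
        (Ioo_subset_Ioo (neg_le_neg hT) hT).eventuallyLE
  have hlim : Tendsto (fun h : ℝ => ∫ v in Ioo 0 N,
      ((deriv φ v : ℝ) : ℂ) * ∫ t in Ioo (-(v / h)) (v / h), g t) (nhdsWithin 0 (Ioi 0))
      (nhds (∫ v in Ioo 0 N, ((deriv φ v : ℝ) : ℂ) * ℓ)) := by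
    refine tendsto_integral_filter_of_dominated_convergence (fun v => ‖((deriv φ v : ℝ) : ℂ)‖ * M)
      ?_ ?_ (hdi.norm.mul_const M) ?_
    · filter_upwards [self_mem_nhdsWithin] with h hh
      exact (setIntegral_mul_comp_abs hg hφ hN hh).1.aestronglyMeasurable
    · refine Eventually.of_forall fun h => Eventually.of_forall fun v => ?_
      rw [norm_mul]
      gcongr
      exact hM _
    · refine (ae_restrict_iff' measurableSet_Ioo).2 (Eventually.of_forall fun v hv => ?_)
      exact (hconv.comp (hdiv v hv.1)).const_mul _
  have hval : ∫ v in Ioo 0 N, ((deriv φ v : ℝ) : ℂ) * ℓ = (φ N - φ 0) * ℓ := by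
    rw [integral_mul_const, ← integral_Ioc_eq_integral_Ioo,
      ← intervalIntegral.integral_of_le hN.le, intervalIntegral.integral_ofReal,
      intervalIntegral.integral_deriv_eq_sub
        (fun v _ => (hφ.differentiable one_ne_zero) v) (hc.intervalIntegrable _ _)]
    push_cast; ring
  rw [hval] at hlim
  have h3 := ((hconv.comp (hdiv N hN)).const_mul (φ N : ℂ)).sub hlim
  rw [show (φ N : ℂ) * ℓ - (φ N - φ 0) * ℓ = φ 0 * ℓ by ring] at h3
  refine h3.congr' ?_
  filter_upwards [self_mem_nhdsWithin] with h hh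
  exact (setIntegral_mul_comp_abs hg hφ hN hh).2.symm

/-! ### The truncation error -/

/-- Uniformly in `h`, truncating the smoothed integral at `|t| h < N` costs at most `2 B / N`. -/
theorem norm_integral_sub_setIntegral_le {f : ℝ → ℂ}
    (hloc : ∀ T > (0 : ℝ), IntegrableOn f (Ioo (-T) T))
    {B : ℝ} (hB : 0 ≤ B) {T₁ : ℝ}
    (hbound : ∀ T > T₁, (1 / T) * ∫ t in Ioo (-T) T, ‖(t : ℂ) * f t‖ ≤ B)
    {g : ℝ → ℂ} (hgm : AEStronglyMeasurable g) (hgf : ∀ t, ‖g t‖ = ‖f t‖)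
    {N h : ℝ} (hN : 0 < N) (hh : 0 < h) (hNT : T₁ < N / h) :
    ‖(∫ t, g t * sincKernel h t) -
      ∫ t in Ioo (-(N / h)) (N / h), g t * Real.sinc (|t| * h)‖ ≤ 2 * B / N := by
  have hA : 0 < N / h := by positivity
  simp_rw [sincKernel_eq_sinc hh]
  have hcont : Continuous fun t : ℝ => (Real.sinc (|t| * h) : ℂ) := by fun_prop
  have hcompl : (Ioo (-(N / h)) (N / h))ᶜ = {t : ℝ | N / h ≤ |t|} := by
    ext t; simp [← abs_lt]
  have htail : ∫⁻ t in (Ioo (-(N / h)) (N / h))ᶜ, ‖g t * Real.sinc (|t| * h)‖ₑ ≤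
      ENNReal.ofReal (2 * B / N) := by
    have hm : MeasurableSet {t : ℝ | N / h ≤ |t|} := hcompl ▸ measurableSet_Ioo.compl
    rw [hcompl]
    calc _ ≤ ∫⁻ t in {t : ℝ | N / h ≤ |t|},
          ENNReal.ofReal (1 / h) * ENNReal.ofReal (‖f t‖ * (1 / |t|)) := by
          refine setLIntegral_mono' hm fun t ht => ?_
          have ht0 : t ≠ 0 := abs_pos.1 (hA.trans_le ht)
          rw [← ENNReal.ofReal_mul (by positivity), ← ofReal_norm, norm_mul, hgf,
            Complex.norm_real, Real.norm_eq_abs, ← sincKernel_eq_sinc hh]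
          apply ENNReal.ofReal_le_ofReal
          calc _ ≤ ‖f t‖ * ((1 / h) * (1 / |t|)) := by gcongr; exact abs_sincKernel_le hh ht0
            _ = _ := by ring
      _ ≤ ENNReal.ofReal (1 / h) * ENNReal.ofReal (2 * B / (N / h)) := by
          rw [lintegral_const_mul' _ _ ENNReal.ofReal_ne_top]
          gcongr
          exact lintegral_tail_le hloc hB hbound hA hNT
      _ = _ := by
          rw [← ENNReal.ofReal_mul (by positivity)]
          congr 1
          field_simp
  have hi1 : IntegrableOn (fun t => g t * Real.sinc (|t| * h)) (Ioo (-(N / h)) (N / h)) := by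
    refine Integrable.mul_bdd (c := 1) ?_ hcont.aestronglyMeasurable
      (Eventually.of_forall fun t => ?_)
    · exact Integrable.congr' (hloc _ hA) hgm.restrict (Eventually.of_forall fun t => (hgf t).symm)
    · rw [Complex.norm_real]; exact Real.abs_sinc_le_one _
  have hi2 : IntegrableOn (fun t => g t * Real.sinc (|t| * h)) (Ioo (-(N / h)) (N / h))ᶜ :=
    ⟨(hgm.mul hcont.aestronglyMeasurable).restrict, htail.trans_lt ENNReal.ofReal_lt_top⟩
  have hi : Integrable (fun t => g t * Real.sinc (|t| * h)) := by
    rw [← integrableOn_univ, ← union_compl_self (Ioo (-(N / h)) (N / h))]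
    exact hi1.union hi2
  rw [← integral_add_compl measurableSet_Ioo hi, add_sub_cancel_left]
  rw [← ENNReal.ofReal_le_ofReal_iff (by positivity), ofReal_norm]
  exact (enorm_integral_le_lintegral_enorm _).trans htail

/-- Theorem 3′: if `f` is Lebesgue integrable on `(-T, T)` for every `T > 0`,
`(1/T) ∫_{|t|<T} |t f(t)| dt ≤ B` for all `T > T₁`, and the symmetric partial integrals
`I_T(x)` converge to a finite limit `ℓ` at some `x`, then
`Δ𝓛(x;h)/(2h) − I_{1/h}(x) → 0` as `h ↓ 0` at this `x`. -/
theorem theorem3'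
    (f : ℝ → ℂ)
    (hloc : ∀ T > (0 : ℝ), IntegrableOn f (Ioo (-T) T))
    (B : ℝ) (hB : 0 ≤ B) (T₁ : ℝ) (hT₁ : 0 < T₁)
    (hbound : ∀ T > T₁, (1 / T) * ∫ t in Ioo (-T) T, ‖(t : ℂ) * f t‖ ≤ B)
    (x : ℝ) (ℓ : ℂ)
    (hconv : Tendsto (fun T : ℝ => ∫ t in Ioo (-T) T, f t * Complex.exp (Complex.I * t * x))
      atTop (nhds ℓ)) :
    Tendsto (fun h : ℝ =>
        (∫ t : ℝ, f t * Complex.exp (Complex.I * t * x) * sincKernel h t) -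
          ∫ t in Ioo (-(1 / h)) (1 / h), f t * Complex.exp (Complex.I * t * x))
      (nhdsWithin 0 (Ioi 0)) (nhds 0) := by
  set g : ℝ → ℂ := fun t => f t * Complex.exp (Complex.I * t * x) with hgdef
  have hfm := aestronglyMeasurable_of_integrableOn_Ioo hloc
  have hexp : Continuous fun t : ℝ => Complex.exp (Complex.I * t * x) := by fun_prop
  have hgm : AEStronglyMeasurable g := hfm.mul hexp.aestronglyMeasurable
  have hgf : ∀ t, ‖g t‖ = ‖f t‖ := by
    intro t
    have : Complex.I * t * x = ((t * x : ℝ) : ℂ) * Complex.I := by push_cast; ring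
    rw [hgdef]
    simp only
    rw [norm_mul, this, Complex.norm_exp_ofReal_mul_I, mul_one]
  have hg : ∀ T > (0 : ℝ), IntegrableOn g (Ioo (-T) T) := fun T hT =>
    Integrable.congr' (hloc T hT) hgm.restrict (Eventually.of_forall fun t => (hgf t).symm)
  have hdiv : ∀ v > 0, Tendsto (fun h : ℝ => v / h) (nhdsWithin 0 (Ioi 0)) atTop := fun v hv =>
    tendsto_inv_nhdsGT_zero.const_mul_atTop hv
  have hmain : Tendsto (fun h : ℝ => ∫ t, g t * sincKernel h t)
      (nhdsWithin 0 (Ioi 0)) (nhds ℓ) := by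
    rw [Metric.tendsto_nhds]
    intro ε hε
    -- This `N` makes the truncation error `2 B / N` smaller than `ε / 2`.
    set N : ℝ := 4 * (B + 1) / ε with hNdef
    have hN : 0 < N := by positivity
    have hNε : 2 * B / N < ε / 2 := by
      rw [div_lt_iff₀ hN, hNdef]
      field_simp
      linarith
    have hin := tendsto_setIntegral_mul_comp_abs hg hconv contDiff_sinc hN
    rw [Real.sinc_zero, Complex.ofReal_one, one_mul, Metric.tendsto_nhds] at hin
    filter_upwards [self_mem_nhdsWithin, hin (ε / 2) (by positivity),
      (hdiv N hN).eventually (eventually_gt_atTop T₁)] with h hh h1 h2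
    have h3 := norm_integral_sub_setIntegral_le hloc hB hbound hgm hgf hN hh h2
    rw [← dist_eq_norm] at h3
    linarith [dist_triangle (∫ t, g t * sincKernel h t)
      (∫ t in Ioo (-(N / h)) (N / h), g t * Real.sinc (|t| * h)) ℓ]
  simpa using hmain.sub (hconv.comp (hdiv 1 one_pos))
end

section
/- Let f : ℝ → ℂ be Lebesgue integrable on (-T, T) for every T > 0, and suppose there exist constants B ≥ 0 and T₁ > 0 such that (1/T) ∫_{|t|<T} |t·f(t)| dt ≤ B for all T > T₁. If at some point x ∈ ℝ the finite limit lim_{T→∞} ∫_{|t|<T} f(t) e^{itx} dt = ℓ exists, then lim_{h↓0} ∫_ℝ f(t) e^{itx} (sin(th)/(th)) dt = ℓ. -/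
/-!
Write `g t = f t * exp (i t x)` and `I T = ∫_{|t| < T} g`, so that `‖g‖ = ‖f‖`, `I T → ℓ`, and the
kernel is `sinc (t h)`. Fix `L > 0` and cut the integral at `|t| = L / h`.

* Inner part (`inner_formula`): since `sinc` is `C¹`, Fubini's theorem (an integration by parts)
  gives `∫_{|t| < L/h} g t sinc (t h) dt = sinc L * I (L/h) - ∫_0^L sinc' u * I (u/h) du`. As
  `h ↓ 0`, dominated convergence (`I` is bounded) sends the right-hand side to
  `sinc L * ℓ - (sinc L - 1) * ℓ = ℓ`.
* Outer part (`tail_bound`): writing `1 / t² = ∫_{|t|}^∞ 2 / u³ du` and using Tonelli's theorem, the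
  averaged bound on `‖t g t‖` gives `∫_{|t| ≥ R} ‖g t‖ / |t| dt ≤ 2 B / R`. Since
  `|sinc (t h)| ≤ 1 / (|t| h)`, the outer part is at most `2 B / L`, uniformly in `h`.

Letting first `h ↓ 0` and then `L → ∞` gives the claim.
-/

open MeasureTheory Filter Set

theorem continuous_deriv_sinc : Continuous (deriv Real.sinc) :=
  contDiff_sinc.continuous_deriv le_rfl

theorem integral_deriv_sinc (a b : ℝ) :
    ∫ u in a..b, deriv Real.sinc u = Real.sinc b - Real.sinc a :=
  intervalIntegral.integral_deriv_eq_sub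
    (fun _ _ => (contDiff_sinc.differentiable one_ne_zero).differentiableAt)
    (continuous_deriv_sinc.intervalIntegrable _ _)

theorem sincKernel_eq {h : ℝ} (hh : h ≠ 0) (t : ℝ) : sincKernel h t = Real.sinc (t * h) := by
  simp [sincKernel, Real.sinc, hh]

/-! ### Tail estimate -/

theorem aestronglyMeasurable_of_loc {g : ℝ → ℂ}
    (hg : ∀ T > (0 : ℝ), IntegrableOn g (Ioo (-T) T)) : AEStronglyMeasurable g := by
  have h : AEStronglyMeasurable g (volume.restrict (⋃ n : ℕ, Ioo (-((n : ℝ) + 1)) ((n : ℝ) + 1))) := by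
    rw [aestronglyMeasurable_iUnion_iff]
    intro n
    exact (hg _ (by positivity)).aestronglyMeasurable
  have hu : (⋃ n : ℕ, Ioo (-((n : ℝ) + 1)) ((n : ℝ) + 1)) = univ := by
    rw [eq_univ_iff_forall]
    intro t
    obtain ⟨n, hn⟩ := exists_nat_gt |t|
    rw [mem_iUnion]
    exact ⟨n, abs_lt.mp (by linarith)⟩
  rwa [hu, Measure.restrict_univ] at h

theorem integrableOn_mul_self {g : ℝ → ℂ}
    (hg : ∀ T > (0 : ℝ), IntegrableOn g (Ioo (-T) T)) {T : ℝ} (hT : 0 < T) :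
    IntegrableOn (fun t : ℝ => (t : ℂ) * g t) (Ioo (-T) T) := by
  refine Integrable.bdd_mul (c := T) (hg T hT) (by fun_prop) ?_
  filter_upwards [ae_restrict_mem measurableSet_Ioo] with t ht
  rw [Complex.norm_real, Real.norm_eq_abs]
  exact (abs_lt.mpr ht).le

theorem lintegral_le_of_bound {g : ℝ → ℂ}
    (hg : ∀ T > (0 : ℝ), IntegrableOn g (Ioo (-T) T)) {B T : ℝ} (hT : 0 < T)
    (hb : (1 / T) * ∫ t in Ioo (-T) T, ‖(t : ℂ) * g t‖ ≤ B) :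
    ∫⁻ t in Ioo (-T) T, ‖(t : ℂ) * g t‖ₑ ≤ ENNReal.ofReal (B * T) := by
  have h := integrableOn_mul_self hg hT
  rw [← ofReal_integral_norm_eq_lintegral_enorm h]
  apply ENNReal.ofReal_le_ofReal
  rw [one_div, inv_mul_le_iff₀ hT] at hb
  linarith

theorem lintegral_Ioi_cube {c : ℝ} (hc : 0 < c) :
    ∫⁻ u in Ioi c, ENNReal.ofReal (2 * u ^ (-3 : ℝ)) = ENNReal.ofReal (1 / c ^ 2) := by
  rw [← ofReal_integral_eq_lintegral_ofReal]
  · rw [integral_const_mul, integral_Ioi_rpow_of_lt (by norm_num) hc]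
    congr 1
    rw [show (-3 + 1 : ℝ) = -(2 : ℕ) by norm_num, Real.rpow_neg hc.le, Real.rpow_natCast]
    field_simp
    norm_num
  · exact (integrableOn_Ioi_rpow_of_lt (by norm_num) hc).const_mul 2
  · filter_upwards [ae_restrict_mem measurableSet_Ioi] with u hu
    have : 0 < u := hc.trans hu
    simp only [Pi.zero_apply]
    positivity

theorem lintegral_Ioi_sq {c B : ℝ} (hc : 0 < c) (hB : 0 ≤ B) :
    ∫⁻ u in Ioi c, ENNReal.ofReal (2 * u ^ (-3 : ℝ)) * ENNReal.ofReal (B * u)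
      = ENNReal.ofReal (2 * B / c) := by
  have h1 : ∫⁻ u in Ioi c, ENNReal.ofReal (2 * u ^ (-3 : ℝ)) * ENNReal.ofReal (B * u)
      = ∫⁻ u in Ioi c, ENNReal.ofReal (2 * B * u ^ (-2 : ℝ)) := by
    refine setLIntegral_congr_fun measurableSet_Ioi fun u hu => ?_
    have hu0 : 0 < u := hc.trans hu
    rw [← ENNReal.ofReal_mul (by positivity)]
    congr 1
    rw [show (-2 : ℝ) = -3 + 1 by norm_num, Real.rpow_add_one hu0.ne']
    ring
  rw [h1, ← ofReal_integral_eq_lintegral_ofReal]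
  · rw [integral_const_mul, integral_Ioi_rpow_of_lt (by norm_num) hc]
    congr 1
    rw [show (-2 + 1 : ℝ) = -1 by norm_num, Real.rpow_neg_one]
    field_simp
  · exact (integrableOn_Ioi_rpow_of_lt (by norm_num) hc).const_mul _
  · filter_upwards [ae_restrict_mem measurableSet_Ioi] with u hu
    have : 0 < u := hc.trans hu
    simp only [Pi.zero_apply]
    positivity

/-- The averaged bound on `‖t g t‖`, integrated against `1 / t² = ∫_{|t|}^∞ 2 / u³ du`. -/
theorem tail_bound {g : ℝ → ℂ}
    (hg : ∀ T > (0 : ℝ), IntegrableOn g (Ioo (-T) T)) {B R : ℝ} (hB : 0 ≤ B) (hR : 0 < R)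
    (hb : ∀ T > R, (1 / T) * ∫ t in Ioo (-T) T, ‖(t : ℂ) * g t‖ ≤ B) :
    ∫⁻ t in (Ioo (-R) R)ᶜ, ‖(t : ℂ) * g t‖ₑ * ENNReal.ofReal (1 / |t| ^ 2)
      ≤ ENNReal.ofReal (2 * B / R) := by
  have hgm := aestronglyMeasurable_of_loc hg
  have hm : AEMeasurable (fun t : ℝ => ‖(t : ℂ) * g t‖ₑ) :=
    (AEStronglyMeasurable.mul (by fun_prop) hgm).enorm
  have hS : MeasurableSet {p : ℝ × ℝ | |p.1| < p.2} :=
    measurableSet_lt (by fun_prop) (by fun_prop)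
  let F : ℝ → ℝ → ENNReal := fun t u =>
    {p : ℝ × ℝ | |p.1| < p.2}.indicator
      (fun p => ‖(p.1 : ℂ) * g p.1‖ₑ * ENNReal.ofReal (2 * p.2 ^ (-3 : ℝ))) (t, u)
  have hF : AEMeasurable (Function.uncurry F)
      ((volume.restrict (Ioo (-R) R)ᶜ).prod (volume.restrict (Ioi R))) := by
    refine AEMeasurable.indicator ?_ hS
    exact hm.restrict.comp_fst.mul
      (Measurable.aemeasurable (f := fun p : ℝ × ℝ => ENNReal.ofReal (2 * p.2 ^ (-3 : ℝ)))
        (by fun_prop))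
  have h1 : ∫⁻ t in (Ioo (-R) R)ᶜ, ‖(t : ℂ) * g t‖ₑ * ENNReal.ofReal (1 / |t| ^ 2)
      = ∫⁻ t in (Ioo (-R) R)ᶜ, ∫⁻ u in Ioi R, F t u := by
    refine setLIntegral_congr_fun measurableSet_Ioo.compl fun t ht => ?_
    have htR : R ≤ |t| := by
      by_contra! hlt
      exact ht (abs_lt.mp hlt)
    have hF' : ∀ u, F t u = (Ioi |t|).indicator
        (fun u => ‖(t : ℂ) * g t‖ₑ * ENNReal.ofReal (2 * u ^ (-3 : ℝ))) u := fun u => by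
      simp [F, indicator]
    simp only [hF']
    rw [lintegral_indicator measurableSet_Ioi, Measure.restrict_restrict measurableSet_Ioi,
      inter_eq_left.mpr (Ioi_subset_Ioi htR), lintegral_const_mul _ (by fun_prop),
      lintegral_Ioi_cube (hR.trans_le htR)]
  rw [h1, lintegral_lintegral_swap hF, ← lintegral_Ioi_sq hR hB]
  refine setLIntegral_mono (by fun_prop) fun u hu => ?_
  have hu0 : 0 < u := hR.trans hu
  have hF' : ∀ t, F t u = (Ioo (-u) u).indicator
      (fun t : ℝ => ENNReal.ofReal (2 * u ^ (-3 : ℝ)) * ‖(t : ℂ) * g t‖ₑ) t := fun t => by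
    simp [F, indicator, abs_lt, mul_comm]
  simp only [hF']
  calc _ ≤ ∫⁻ t, (Ioo (-u) u).indicator
          (fun t : ℝ => ENNReal.ofReal (2 * u ^ (-3 : ℝ)) * ‖(t : ℂ) * g t‖ₑ) t :=
        setLIntegral_le_lintegral _ _
    _ = ENNReal.ofReal (2 * u ^ (-3 : ℝ)) * ∫⁻ t in Ioo (-u) u, ‖(t : ℂ) * g t‖ₑ := by
        rw [lintegral_indicator measurableSet_Ioo, lintegral_const_mul'' _ hm.restrict]
    _ ≤ _ := by gcongr; exact lintegral_le_of_bound hg hu0 (hb u hu)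

/-- The part `|t| ≥ L / h` of the kernel integral is bounded by `2 B / L` uniformly in `h`; the
bound on the lower integral also yields integrability there. -/
theorem outer_bound {g : ℝ → ℂ}
    (hg : ∀ T > (0 : ℝ), IntegrableOn g (Ioo (-T) T)) {B L h : ℝ} (hB : 0 ≤ B) (hL : 0 < L)
    (hh : 0 < h)
    (hb : ∀ T > L / h, (1 / T) * ∫ t in Ioo (-T) T, ‖(t : ℂ) * g t‖ ≤ B) :
    ∫⁻ t in (Ioo (-(L / h)) (L / h))ᶜ, ‖g t * Real.sinc (t * h)‖ₑ ≤ ENNReal.ofReal (2 * B / L) := by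
  have hR : 0 < L / h := by positivity
  calc _ ≤ ∫⁻ t in (Ioo (-(L / h)) (L / h))ᶜ, ENNReal.ofReal (1 / h) *
        (‖(t : ℂ) * g t‖ₑ * ENNReal.ofReal (1 / |t| ^ 2)) := by
        refine setLIntegral_mono' measurableSet_Ioo.compl fun t ht => ?_
        have ht0 : 0 < |t| := by
          by_contra! hlt
          exact ht (abs_lt.mp (hlt.trans_lt hR))
        have ht1 : t ≠ 0 := abs_pos.mp ht0
        rw [← ofReal_norm, ← ofReal_norm, ← ENNReal.ofReal_mul (norm_nonneg _),
          ← ENNReal.ofReal_mul (by positivity)]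
        apply ENNReal.ofReal_le_ofReal
        rw [norm_mul, norm_mul, Complex.norm_real, Complex.norm_real, Real.norm_eq_abs,
          Real.norm_eq_abs, Real.sinc_of_ne_zero (by positivity), abs_div, abs_mul, abs_of_pos hh]
        calc ‖g t‖ * (|Real.sin (t * h)| / (|t| * h)) ≤ ‖g t‖ * (1 / (|t| * h)) := by
              gcongr
              exact Real.abs_sin_le_one _
          _ = _ := by field_simp
    _ ≤ ENNReal.ofReal (1 / h) * ENNReal.ofReal (2 * B / (L / h)) := by
        rw [lintegral_const_mul' _ _ ENNReal.ofReal_ne_top]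
        gcongr
        exact tail_bound hg hB hR hb
    _ = _ := by
        rw [← ENNReal.ofReal_mul (by positivity)]
        congr 1
        field_simp

/-! ### The truncated integral -/

/-- Integration by parts on `|t| < L / h`, in the form given by Fubini's theorem applied to
`sinc (t h) = sinc L - ∫_{|t| h}^L sinc' u du`. -/
theorem inner_formula {g : ℝ → ℂ}
    (hg : ∀ T > (0 : ℝ), IntegrableOn g (Ioo (-T) T)) {L h : ℝ} (hL : 0 < L) (hh : 0 < h) :
    ∫ t in Ioo (-(L / h)) (L / h), g t * Real.sinc (t * h)
      = (∫ t in Ioo (-(L / h)) (L / h), g t) * Real.sinc L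
        - ∫ u in Ioc 0 L, (∫ t in Ioo (-(u / h)) (u / h), g t) * (deriv Real.sinc u : ℝ) := by
  have hR : 0 < L / h := by positivity
  have hgR := hg _ hR
  have hS : MeasurableSet {p : ℝ × ℝ | |p.1| * h < p.2} :=
    measurableSet_lt (by fun_prop) (by fun_prop)
  let F : ℝ → ℝ → ℂ := fun t u =>
    {p : ℝ × ℝ | |p.1| * h < p.2}.indicator
      (fun p => g p.1 * (deriv Real.sinc p.2 : ℝ)) (t, u)
  have hd : IntegrableOn (fun u => ((deriv Real.sinc u : ℝ) : ℂ)) (Ioc 0 L) :=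
    ((Complex.continuous_ofReal.comp continuous_deriv_sinc).continuousOn.integrableOn_Icc
      ).mono_set Ioc_subset_Icc_self
  have hF : Integrable (Function.uncurry F)
      ((volume.restrict (Ioo (-(L / h)) (L / h))).prod (volume.restrict (Ioc 0 L))) :=
    (Integrable.mul_prod hgR hd).indicator hS
  have h1 : ∀ t ∈ Ioo (-(L / h)) (L / h),
      g t * Real.sinc (t * h) = g t * Real.sinc L - ∫ u in Ioc 0 L, F t u := by
    intro t ht
    have htL : |t| * h < L := by
      rw [← lt_div_iff₀ hh]; exact abs_lt.mpr ht
    have hF' : ∀ u, F t u = (Ioi (|t| * h)).indicator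
        (fun u => g t * (deriv Real.sinc u : ℝ)) u := fun u => by
      simp [F, indicator]
    have hi : Ioi (|t| * h) ∩ Ioc 0 L = Ioc (|t| * h) L := by
      ext u
      simp only [mem_inter_iff, mem_Ioi, mem_Ioc]
      have : 0 ≤ |t| * h := by positivity
      constructor
      · rintro ⟨a, b, c⟩; exact ⟨a, c⟩
      · rintro ⟨a, c⟩; exact ⟨a, this.trans_lt a, c⟩
    simp only [hF']
    rw [integral_indicator measurableSet_Ioi, Measure.restrict_restrict measurableSet_Ioi, hi,
      integral_const_mul, integral_complex_ofReal,
      ← intervalIntegral.integral_of_le htL.le, integral_deriv_sinc]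
    have : Real.sinc (|t| * h) = Real.sinc (t * h) := by
      rcases abs_choice t with h' | h' <;> simp [h']
    rw [this]
    push_cast
    ring
  rw [setIntegral_congr_fun measurableSet_Ioo h1, integral_sub (hgR.mul_const _)
    (show Integrable (fun t => ∫ u in Ioc 0 L, F t u) _ from hF.integral_prod_left),
    integral_mul_const, integral_integral_swap hF]
  congr 1
  refine setIntegral_congr_fun measurableSet_Ioc fun u hu => ?_
  have hF' : ∀ t, F t u = (Ioo (-(u / h)) (u / h)).indicator
      (fun t => g t * (deriv Real.sinc u : ℝ)) t := fun t => by
    have : |t| * h < u ↔ (-(u / h) < t ∧ t < u / h) := by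
      rw [← abs_lt, lt_div_iff₀ hh]
    simp [F, indicator, this]
  have huL : u / h ≤ L / h := by gcongr; exact hu.2
  simp only [hF']
  rw [integral_indicator measurableSet_Ioo, Measure.restrict_restrict measurableSet_Ioo,
    inter_eq_left.mpr (Ioo_subset_Ioo (by linarith) huL), integral_mul_const]

theorem bounded_partial {g : ℝ → ℂ}
    (hg : ∀ T > (0 : ℝ), IntegrableOn g (Ioo (-T) T)) {ℓ : ℂ}
    (hconv : Tendsto (fun T : ℝ => ∫ t in Ioo (-T) T, g t) atTop (nhds ℓ)) :
    ∃ C, ∀ T, ‖∫ t in Ioo (-T) T, g t‖ ≤ C := by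
  have h1 : ∀ᶠ T : ℝ in atTop, ‖∫ t in Ioo (-T) T, g t‖ < ‖ℓ‖ + 1 :=
    hconv.norm.eventually_lt_const (by linarith)
  obtain ⟨T₂, h2⟩ := eventually_atTop.mp h1
  have hpos : 0 < max T₂ 1 := by positivity
  refine ⟨max (‖ℓ‖ + 1) (∫ t in Ioo (-(max T₂ 1)) (max T₂ 1), ‖g t‖), fun T => ?_⟩
  rcases le_total T₂ T with h | h
  · exact (h2 T h).le.trans (le_max_left _ _)
  · have hT : T ≤ max T₂ 1 := h.trans (le_max_left _ _)
    refine le_trans (norm_integral_le_integral_norm _) (le_trans ?_ (le_max_right _ _))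
    exact setIntegral_mono_set (hg _ hpos).norm (ae_of_all _ fun t => norm_nonneg _)
      (Ioo_subset_Ioo (by linarith) hT).eventuallyLE

theorem continuousOn_partial {g : ℝ → ℂ}
    (hg : ∀ T > (0 : ℝ), IntegrableOn g (Ioo (-T) T)) :
    ContinuousOn (fun T : ℝ => ∫ t in Ioo (-T) T, g t) (Ioi 0) := by
  have hi : ∀ a b, IntervalIntegrable g volume a b := by
    intro a b
    rw [intervalIntegrable_iff]
    have h1 := abs_nonneg a
    have h2 := abs_nonneg b
    refine (hg (|a| + |b| + 1) (by positivity)).mono_set fun t ht => abs_lt.mp ?_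
    rcases mem_uIoc.mp ht with ⟨h3, h4⟩ | ⟨h3, h4⟩ <;> rw [abs_lt] <;>
      constructor <;> linarith [neg_abs_le a, neg_abs_le b, le_abs_self a, le_abs_self b]
  have hc := intervalIntegral.continuous_primitive hi 0
  have h : Continuous fun T : ℝ => (∫ t in (0 : ℝ)..T, g t) - ∫ t in (0 : ℝ)..(-T), g t :=
    hc.sub (hc.comp continuous_neg)
  refine h.continuousOn.congr fun T hT => ?_
  have hT' : (0 : ℝ) < T := hT
  simp only
  rw [intervalIntegral.integral_interval_sub_left (hi _ _) (hi _ _),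
    intervalIntegral.integral_of_le (by linarith), integral_Ioc_eq_integral_Ioo]

/-- For fixed `L`, the part `|t| < L / h` of the kernel integral tends to `ℓ`: the right-hand side
of `inner_formula` converges by dominated convergence. -/
theorem inner_tendsto {g : ℝ → ℂ}
    (hg : ∀ T > (0 : ℝ), IntegrableOn g (Ioo (-T) T)) {ℓ : ℂ}
    (hconv : Tendsto (fun T : ℝ => ∫ t in Ioo (-T) T, g t) atTop (nhds ℓ)) {L : ℝ} (hL : 0 < L) :
    Tendsto (fun h : ℝ => ∫ t in Ioo (-(L / h)) (L / h), g t * Real.sinc (t * h))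
      (nhdsWithin 0 (Ioi 0)) (nhds ℓ) := by
  obtain ⟨C, hC⟩ := bounded_partial hg hconv
  have hdiv : ∀ u : ℝ, 0 < u → Tendsto (fun h : ℝ => u / h) (nhdsWithin 0 (Ioi 0)) atTop :=
    fun u hu => by
      simpa only [div_eq_mul_inv] using tendsto_inv_nhdsGT_zero.const_mul_atTop hu
  have hlim : Tendsto (fun h : ℝ => ∫ u in Ioc 0 L,
      (∫ t in Ioo (-(u / h)) (u / h), g t) * (deriv Real.sinc u : ℝ))
      (nhdsWithin 0 (Ioi 0)) (nhds (∫ u in Ioc 0 L, ℓ * (deriv Real.sinc u : ℝ))) := by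
    refine tendsto_integral_filter_of_dominated_convergence
      (fun u => C * |deriv Real.sinc u|) ?_ ?_ ?_ ?_
    · filter_upwards [self_mem_nhdsWithin] with h hh
      have hh' : (0 : ℝ) < h := hh
      refine ContinuousOn.aestronglyMeasurable ?_ measurableSet_Ioc
      refine ContinuousOn.mul ?_
        (Complex.continuous_ofReal.comp continuous_deriv_sinc).continuousOn
      refine (continuousOn_partial hg).comp (f := fun u : ℝ => u / h) (by fun_prop) fun u hu => ?_
      exact div_pos hu.1 hh'
    · refine Eventually.of_forall fun h => Eventually.of_forall fun u => ?_
      rw [norm_mul, Complex.norm_real, Real.norm_eq_abs]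
      gcongr
      exact hC _
    · exact ((continuous_const.mul continuous_deriv_sinc.abs).continuousOn.integrableOn_Icc
        ).mono_set Ioc_subset_Icc_self
    · filter_upwards [ae_restrict_mem measurableSet_Ioc] with u hu
      exact (hconv.comp (hdiv u hu.1)).mul_const _
  have hval : ∫ u in Ioc 0 L, ℓ * ((deriv Real.sinc u : ℝ) : ℂ) = ℓ * (Real.sinc L - 1) := by
    rw [integral_const_mul, integral_complex_ofReal, ← intervalIntegral.integral_of_le hL.le,
      integral_deriv_sinc]
    simp
  have hfin := ((hconv.comp (hdiv L hL)).mul_const (Real.sinc L : ℂ)).sub hlim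
  rw [hval, show ℓ * (Real.sinc L : ℂ) - ℓ * (Real.sinc L - 1) = ℓ by ring] at hfin
  refine hfin.congr' ?_
  filter_upwards [self_mem_nhdsWithin] with h hh
  exact (inner_formula hg hL hh).symm

/-! ### Summability -/

theorem sinc_summable {g : ℝ → ℂ}
    (hg : ∀ T > (0 : ℝ), IntegrableOn g (Ioo (-T) T)) {B T₁ : ℝ} (hB : 0 ≤ B)
    (hb : ∀ T > T₁, (1 / T) * ∫ t in Ioo (-T) T, ‖(t : ℂ) * g t‖ ≤ B) {ℓ : ℂ}
    (hconv : Tendsto (fun T : ℝ => ∫ t in Ioo (-T) T, g t) atTop (nhds ℓ)) :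
    Tendsto (fun h : ℝ => ∫ t, g t * Real.sinc (t * h)) (nhdsWithin 0 (Ioi 0)) (nhds ℓ) := by
  rw [Metric.tendsto_nhds]
  intro ε hε
  -- `L` is chosen so that the outer part, at most `2 B / L`, is below `ε / 2`.
  obtain ⟨L, hL, hLε⟩ : ∃ L : ℝ, 0 < L ∧ 2 * B / L < ε / 2 := by
    refine ⟨(4 * B + 1) / ε, by positivity, ?_⟩
    rw [div_lt_iff₀ (by positivity)]
    field_simp
    linarith
  have hT : ∀ᶠ h : ℝ in nhdsWithin 0 (Ioi 0), T₁ < L / h := by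
    have : Tendsto (fun h : ℝ => L / h) (nhdsWithin 0 (Ioi 0)) atTop := by
      simpa only [div_eq_mul_inv] using tendsto_inv_nhdsGT_zero.const_mul_atTop hL
    exact this.eventually_gt_atTop T₁
  have hin := Metric.tendsto_nhds.mp (inner_tendsto hg hconv hL) (ε / 2) (by positivity)
  filter_upwards [hT, hin, self_mem_nhdsWithin] with h hhT hhin hh
  have hh' : (0 : ℝ) < h := hh
  have hout := outer_bound hg hB hL hh' fun T hT => hb T (hhT.trans hT)
  have hm : AEStronglyMeasurable (fun t : ℝ => g t * Real.sinc (t * h)) :=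
    (aestronglyMeasurable_of_loc hg).mul (Continuous.aestronglyMeasurable (by fun_prop))
  have hi2 : IntegrableOn (fun t : ℝ => g t * Real.sinc (t * h)) (Ioo (-(L / h)) (L / h))ᶜ :=
    ⟨hm.restrict, hout.trans_lt ENNReal.ofReal_lt_top⟩
  have hi1 : IntegrableOn (fun t : ℝ => g t * Real.sinc (t * h)) (Ioo (-(L / h)) (L / h)) := by
    refine Integrable.mul_bdd (c := 1) (hg _ (by positivity))
      (Continuous.aestronglyMeasurable (by fun_prop)) (Eventually.of_forall fun t => ?_)
    rw [Complex.norm_real]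
    exact Real.abs_sinc_le_one _
  have hi : Integrable (fun t : ℝ => g t * Real.sinc (t * h)) := by
    rw [← integrableOn_univ, ← union_compl_self (Ioo (-(L / h)) (L / h))]
    exact hi1.union hi2
  have hn : ‖∫ t in (Ioo (-(L / h)) (L / h))ᶜ, g t * Real.sinc (t * h)‖ ≤ 2 * B / L := by
    rw [← ENNReal.ofReal_le_ofReal_iff (by positivity), ofReal_norm]
    exact (enorm_integral_le_lintegral_enorm _).trans hout
  rw [← integral_add_compl measurableSet_Ioo hi, dist_eq_norm, add_sub_right_comm]
  rw [dist_eq_norm] at hhin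
  exact (norm_add_le _ _).trans_lt (by linarith)

/-- Lebesgue summability: under the hypotheses of Theorem 3′, if the symmetric partial
integrals `I_T(x)` converge to `ℓ` at some `x`, then `Δ𝓛(x;h)/(2h) → ℓ` as `h ↓ 0`. -/
theorem lebesgue_summable
    (f : ℝ → ℂ)
    (hloc : ∀ T > (0 : ℝ), IntegrableOn f (Ioo (-T) T))
    (B : ℝ) (hB : 0 ≤ B) (T₁ : ℝ) (hT₁ : 0 < T₁)
    (hbound : ∀ T > T₁, (1 / T) * ∫ t in Ioo (-T) T, ‖(t : ℂ) * f t‖ ≤ B)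
    (x : ℝ) (ℓ : ℂ)
    (hconv : Tendsto (fun T : ℝ => ∫ t in Ioo (-T) T, f t * Complex.exp (Complex.I * t * x))
      atTop (nhds ℓ)) :
    Tendsto (fun h : ℝ => ∫ t : ℝ, f t * Complex.exp (Complex.I * t * x) * sincKernel h t)
      (nhdsWithin 0 (Ioi 0)) (nhds ℓ) := by
  have hE : ∀ t : ℝ, ‖Complex.exp (Complex.I * t * x)‖ = 1 := fun t => by
    rw [show Complex.I * t * x = ((t * x : ℝ) : ℂ) * Complex.I by push_cast; ring,
      Complex.norm_exp_ofReal_mul_I]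
  have hg : ∀ T > (0 : ℝ),
      IntegrableOn (fun t : ℝ => f t * Complex.exp (Complex.I * t * x)) (Ioo (-T) T) :=
    fun T hT => Integrable.mul_bdd (c := 1) (hloc T hT)
      (Continuous.aestronglyMeasurable (by fun_prop)) (Eventually.of_forall fun t => (hE t).le)
  have hb : ∀ T > T₁, (1 / T) * ∫ t in Ioo (-T) T,
      ‖(t : ℂ) * (f t * Complex.exp (Complex.I * t * x))‖ ≤ B := by
    simpa only [norm_mul, hE, mul_one] using hbound
  refine (sinc_summable hg hB hb hconv).congr' ?_
  filter_upwards [self_mem_nhdsWithin] with h hh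
  simp only [sincKernel_eq (ne_of_gt hh)]
end

section
/- Let f : ℝ → ℂ be Lebesgue integrable on (-T, T) for every T > 0, and suppose that (1/T) ∫_{|t|<T} |t·f(t)| dt → 0 as T → ∞. Then T · ∫_{|t|>T} |f(t)/t| dt → 0 as T → ∞ (in particular, for all sufficiently large T the function t ↦ f(t)/t is Lebesgue integrable on {t : |t| > T}). -/
open MeasureTheory Filter Set

/-!
The proof splits the tail dyadically. On the shell `T 2^k ≤ |t| < T 2^(k+1)` one has
`|f(t)/t| = |t f(t)| / t² ≤ |t f(t)| / (T 2^k)²`. If `∫_{|t|<S} |t f(t)| dt ≤ ε S` for all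
`S ≥ T`, then the shell contributes at most `ε T 2^(k+1) / (T 2^k)² = (2ε/T) 2^(-k)`, and the
geometric series gives `∫_{|t|>T} |f(t)/t| dt ≤ 4ε/T`. Working with lower Lebesgue integrals
(`lintegral_tail_le`) yields the integrability of `f(t)/t` together with the bound.
-/

/-- The dyadic summation: a linear bound on the truncated first moments at all scales `S ≥ T`
bounds the tail of `f(t)/t` beyond `T`. No measurability of `f` is needed. -/
lemma lintegral_tail_le_s3 (f : ℝ → ℂ) {T ε : ℝ} (hT : 0 < T) (hε : 0 < ε)
    (h : ∀ S ≥ T, ∫⁻ t in Ioo (-S) S, ‖(t : ℂ) * f t‖ₑ ≤ ENNReal.ofReal (ε * S)) :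
    ∫⁻ t in {t : ℝ | T < |t|}, ‖f t / (t : ℂ)‖ₑ ≤ ENNReal.ofReal (4 * ε / T) := by
  let A : ℕ → Set ℝ := fun k => {t | T * 2 ^ k ≤ |t| ∧ |t| < T * 2 ^ (k + 1)}
  have hA : ∀ k, MeasurableSet (A k) := fun k =>
    (measurableSet_le measurable_const measurable_abs).inter
      (measurableSet_lt measurable_abs measurable_const)
  have hcov : {t : ℝ | T < |t|} ⊆ ⋃ k, A k := by
    intro t ht
    have ht : T < |t| := ht
    obtain ⟨k, hk1, hk2⟩ := exists_nat_pow_near (x := |t| / T) (y := (2 : ℝ))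
      (by rw [le_div_iff₀ hT]; linarith) (by norm_num)
    rw [le_div_iff₀ hT] at hk1
    rw [div_lt_iff₀ hT] at hk2
    exact mem_iUnion.2 ⟨k, by linarith, by linarith⟩
  have hshell : ∀ k, ∫⁻ t in A k, ‖f t / (t : ℂ)‖ₑ ≤
      ENNReal.ofReal (2 * ε / T * (1 / 2) ^ k) := by
    intro k
    have hR : 0 < T * 2 ^ k := by positivity
    calc ∫⁻ t in A k, ‖f t / (t : ℂ)‖ₑ
        ≤ ∫⁻ t in A k, ENNReal.ofReal (1 / (T * 2 ^ k) ^ 2) * ‖(t : ℂ) * f t‖ₑ := by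
          refine setLIntegral_mono' (hA k) fun t ht => ?_
          have ht0 : 0 < |t| := hR.trans_le ht.1
          rw [← ofReal_norm, ← ofReal_norm,
            ← ENNReal.ofReal_mul (by positivity)]
          refine ENNReal.ofReal_le_ofReal ?_
          rw [norm_div, norm_mul, Complex.norm_real, Real.norm_eq_abs]
          have hsq : 1 / |t| ^ 2 ≤ 1 / (T * 2 ^ k) ^ 2 :=
            one_div_le_one_div_of_le (by positivity) (pow_le_pow_left₀ hR.le ht.1 2)
          calc ‖f t‖ / |t| = 1 / |t| ^ 2 * (|t| * ‖f t‖) := by field_simp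
            _ ≤ _ := by gcongr
      _ = ENNReal.ofReal (1 / (T * 2 ^ k) ^ 2) * ∫⁻ t in A k, ‖(t : ℂ) * f t‖ₑ :=
          lintegral_const_mul' _ _ ENNReal.ofReal_ne_top
      _ ≤ ENNReal.ofReal (1 / (T * 2 ^ k) ^ 2) *
            ENNReal.ofReal (ε * (T * 2 ^ (k + 1))) := by
          gcongr
          refine (lintegral_mono_set fun t ht => abs_lt.1 ht.2).trans (h _ ?_)
          exact le_mul_of_one_le_right hT.le (one_le_pow₀ (by norm_num))
      _ = ENNReal.ofReal (2 * ε / T * (1 / 2) ^ k) := by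
          rw [← ENNReal.ofReal_mul (by positivity)]
          congr 1
          rw [one_div_pow]
          field_simp
          ring
  calc ∫⁻ t in {t : ℝ | T < |t|}, ‖f t / (t : ℂ)‖ₑ
      ≤ ∫⁻ t in ⋃ k, A k, ‖f t / (t : ℂ)‖ₑ := lintegral_mono_set hcov
    _ ≤ ∑' k, ∫⁻ t in A k, ‖f t / (t : ℂ)‖ₑ := lintegral_iUnion_le _ _
    _ ≤ ∑' k : ℕ, ENNReal.ofReal (2 * ε / T * (1 / 2) ^ k) := ENNReal.tsum_le_tsum hshell
    _ = ENNReal.ofReal (4 * ε / T) := by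
        rw [← ENNReal.ofReal_tsum_of_nonneg (fun k => by positivity)
          (summable_geometric_two.mul_left _), tsum_mul_left, tsum_geometric_two]
        congr 1
        ring

/-- Lemma 2′: if `f` is Lebesgue integrable on `(-T, T)` for every `T > 0` and
`(1/T) ∫_{|t|<T} |t f(t)| dt → 0` as `T → ∞`, then `T ∫_{|t|>T} |f(t)/t| dt → 0`
as `T → ∞`; in particular `t ↦ f(t)/t` is integrable on `{|t| > T}` for all large `T`. -/
theorem lemma2'
    (f : ℝ → ℂ)
    (hloc : ∀ T > (0 : ℝ), IntegrableOn f (Ioo (-T) T))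
    (hmean : Tendsto (fun T : ℝ => (1 / T) * ∫ t in Ioo (-T) T, ‖(t : ℂ) * f t‖)
      atTop (nhds 0)) :
    (∃ T₀ : ℝ, ∀ T > T₀, IntegrableOn (fun t : ℝ => f t / (t : ℂ)) {t : ℝ | T < |t|}) ∧
      Tendsto (fun T : ℝ => T * ∫ t in {t : ℝ | T < |t|}, ‖f t / (t : ℂ)‖)
        atTop (nhds 0) := by
  have hfm : AEStronglyMeasurable f volume := by
    have hU : (⋃ n : ℕ, Ioo (-((n : ℝ) + 1)) ((n : ℝ) + 1)) = univ := by
      refine eq_univ_of_forall fun t => ?_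
      obtain ⟨n, hn⟩ := exists_nat_gt |t|
      exact mem_iUnion.2 ⟨n, abs_lt.1 (by linarith)⟩
    rw [← Measure.restrict_univ (μ := (volume : Measure ℝ)), ← hU,
      aestronglyMeasurable_iUnion_iff]
    exact fun n => (hloc _ (by positivity)).aestronglyMeasurable
  have hgm : AEStronglyMeasurable (fun t : ℝ => f t / (t : ℂ)) volume := by
    have : Measurable fun t : ℝ => (t : ℂ) := Complex.measurable_ofReal
    exact (hfm.aemeasurable.div this.aemeasurable).aestronglyMeasurable
  have hmul : ∀ S > (0 : ℝ), IntegrableOn (fun t : ℝ => (t : ℂ) * f t) (Ioo (-S) S) := by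
    intro S hS
    refine Integrable.mono' ((hloc S hS).norm.const_mul S)
      (Complex.continuous_ofReal.aestronglyMeasurable.mul hfm).restrict ?_
    filter_upwards [ae_restrict_mem measurableSet_Ioo] with t ht
    rw [norm_mul, Complex.norm_real, Real.norm_eq_abs]
    gcongr
    exact (abs_lt.2 ht).le
  have key : ∀ ε > (0 : ℝ), ∃ T₀ > (0 : ℝ), ∀ T ≥ T₀,
      ∫⁻ t in {t : ℝ | T < |t|}, ‖f t / (t : ℂ)‖ₑ ≤ ENNReal.ofReal (4 * ε / T) := by
    intro ε hε
    obtain ⟨T₁, hT₁⟩ := eventually_atTop.1 (hmean.eventually (gt_mem_nhds hε))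
    refine ⟨max T₁ 1, by positivity, fun T hT => ?_⟩
    have hT1 : 1 ≤ T := (le_max_right _ _).trans hT
    refine lintegral_tail_le_s3 f (by linarith) hε fun S hS => ?_
    have hS0 : 0 < S := by linarith
    have hS1 := hT₁ S (((le_max_left _ _).trans hT).trans hS)
    rw [← ofReal_integral_norm_eq_lintegral_enorm (hmul S hS0)]
    refine ENNReal.ofReal_le_ofReal ?_
    rw [one_div_mul_eq_div, div_lt_iff₀ hS0] at hS1
    exact hS1.le
  constructor
  · obtain ⟨T₀, -, hT₀⟩ := key 1 one_pos
    exact ⟨T₀, fun T hT => ⟨hgm.restrict, (hT₀ T hT.le).trans_lt ENNReal.ofReal_lt_top⟩⟩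
  · rw [Metric.tendsto_atTop]
    intro ε hε
    obtain ⟨T₀, hT₀, h⟩ := key (ε / 8) (by positivity)
    refine ⟨T₀, fun T hT => ?_⟩
    have hTpos : 0 < T := hT₀.trans_le hT
    have hI : ∫ t in {t : ℝ | T < |t|}, ‖f t / (t : ℂ)‖ ≤ 4 * (ε / 8) / T := by
      rw [integral_norm_eq_lintegral_enorm hgm.restrict]
      exact ENNReal.toReal_le_of_le_ofReal (by positivity) (h T hT)
    have hnn : 0 ≤ ∫ t in {t : ℝ | T < |t|}, ‖f t / (t : ℂ)‖ :=
      integral_nonneg fun _ => norm_nonneg _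
    rw [Real.dist_eq, sub_zero, abs_of_nonneg (by positivity)]
    rw [le_div_iff₀ hTpos] at hI
    linarith
end

section
/- Let f : ℝ → ℂ be Lebesgue integrable on (-T, T) for every T > 0, and suppose there exist constants B ≥ 0 and T₁ > 0 such that (1/T) ∫_{|t|<T} |t·f(t)| dt ≤ B for all T > T₁. Then T · ∫_{|t|>T} |f(t)/t| dt ≤ 4B for all T > T₁ (in particular, for every T > T₁ the function t ↦ f(t)/t is Lebesgue integrable on {t : |t| > T}). -/
/-!
The proof is a dyadic decomposition. Cover `{|t| > T}` by the annuli
`2 ^ k * T ≤ |t| < 2 ^ (k + 1) * T`, `k : ℕ`. On the `k`-th annulus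
`|f t / t| ≤ |t * f t| / (2 ^ k * T) ^ 2`, so the hypothesis at `2 ^ (k + 1) * T` bounds the integral
of `|f t / t|` there by `B * (2 ^ (k + 1) * T) / (2 ^ k * T) ^ 2 = (2 * B / T) * (1 / 2) ^ k`
(`lintegral_annulus_le`), and the geometric series sums to `4 * B / T`. The estimate is carried out
with Lebesgue integrals in `ℝ≥0∞`, so that integrability and the bound come out together.
-/

open MeasureTheory Filter Set

/-- The bound on the Bochner integral passes to the `ℝ≥0∞`-valued integral because local integrability
of `f` makes `t * f t` integrable on bounded intervals, so that the former is not a junk value. -/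
lemma lintegral_id_mul_le {f : ℝ → ℂ} {B S : ℝ} (hS : 0 < S) (hf : IntegrableOn f (Ioo (-S) S))
    (hb : (1 / S) * ∫ t in Ioo (-S) S, ‖(t : ℂ) * f t‖ ≤ B) :
    ∫⁻ t in Ioo (-S) S, ‖(t : ℂ) * f t‖ₑ ≤ ENNReal.ofReal (B * S) := by
  have hint : IntegrableOn (fun t : ℝ => (t : ℂ) * f t) (Ioo (-S) S) := by
    refine Integrable.bdd_mul (c := S) hf Complex.continuous_ofReal.aestronglyMeasurable ?_
    filter_upwards [ae_restrict_mem measurableSet_Ioo] with t ht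
    rw [Complex.norm_real, Real.norm_eq_abs]
    exact (abs_lt.2 ht).le
  rw [← ofReal_integral_norm_eq_lintegral_enorm hint]
  apply ENNReal.ofReal_le_ofReal
  rwa [one_div, inv_mul_le_iff₀ hS, mul_comm] at hb

lemma lintegral_annulus_le {f : ℝ → ℂ} {B R : ℝ} (hR : 0 < R)
    (hf : IntegrableOn f (Ioo (-(2 * R)) (2 * R)))
    (hb : (1 / (2 * R)) * ∫ t in Ioo (-(2 * R)) (2 * R), ‖(t : ℂ) * f t‖ ≤ B) :
    ∫⁻ t in {t : ℝ | R ≤ |t| ∧ |t| < 2 * R}, ‖f t / (t : ℂ)‖ₑ ≤ ENNReal.ofReal (2 * B / R) := by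
  have hmeas : MeasurableSet {t : ℝ | R ≤ |t| ∧ |t| < 2 * R} := by measurability
  calc ∫⁻ t in {t : ℝ | R ≤ |t| ∧ |t| < 2 * R}, ‖f t / (t : ℂ)‖ₑ
      ≤ ∫⁻ t in {t : ℝ | R ≤ |t| ∧ |t| < 2 * R},
          ENNReal.ofReal (1 / R ^ 2) * ‖(t : ℂ) * f t‖ₑ := by
        refine setLIntegral_mono' hmeas fun t ht => ?_
        have ht0 : 0 < |t| := hR.trans_le ht.1
        rw [← ofReal_norm, ← ofReal_norm,
          ← ENNReal.ofReal_mul (by positivity)]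
        apply ENNReal.ofReal_le_ofReal
        rw [norm_div, norm_mul, Complex.norm_real, Real.norm_eq_abs, one_div_mul_eq_div,
          div_le_div_iff₀ ht0 (by positivity)]
        have h2 : R ^ 2 ≤ |t| ^ 2 := by gcongr; exact ht.1
        nlinarith [mul_le_mul_of_nonneg_left h2 (norm_nonneg (f t))]
    _ = ENNReal.ofReal (1 / R ^ 2) *
          ∫⁻ t in {t : ℝ | R ≤ |t| ∧ |t| < 2 * R}, ‖(t : ℂ) * f t‖ₑ :=
        lintegral_const_mul' _ _ ENNReal.ofReal_ne_top
    _ ≤ ENNReal.ofReal (1 / R ^ 2) * ENNReal.ofReal (B * (2 * R)) := by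
        gcongr
        refine (lintegral_mono_set fun t ht => ?_).trans
          (lintegral_id_mul_le (by positivity) hf hb)
        exact abs_lt.1 ht.2
    _ = ENNReal.ofReal (2 * B / R) := by
        rw [← ENNReal.ofReal_mul (by positivity)]
        congr 1
        field_simp

lemma subset_iUnion_annulus {T : ℝ} (hT : 0 < T) :
    {t : ℝ | T < |t|} ⊆ ⋃ k : ℕ, {t : ℝ | 2 ^ k * T ≤ |t| ∧ |t| < 2 * (2 ^ k * T)} := by
  intro t ht
  obtain ⟨k, hk1, hk2⟩ := exists_nat_pow_near ((one_le_div hT).2 (le_of_lt ht)) one_lt_two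
  refine mem_iUnion.2 ⟨k, (le_div_iff₀ hT).1 hk1, ?_⟩
  rw [div_lt_iff₀ hT, pow_succ] at hk2
  linarith

/-- Lemma 3′: if `f` is Lebesgue integrable on `(-T, T)` for every `T > 0` and
`(1/T) ∫_{|t|<T} |t f(t)| dt ≤ B` for all `T > T₁`, then for every `T > T₁` the function
`t ↦ f(t)/t` is integrable on `{|t| > T}` and `T ∫_{|t|>T} |f(t)/t| dt ≤ 4B`. -/
theorem lemma3'
    (f : ℝ → ℂ)
    (hloc : ∀ T > (0 : ℝ), IntegrableOn f (Ioo (-T) T))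
    (B : ℝ) (hB : 0 ≤ B) (T₁ : ℝ) (hT₁ : 0 < T₁)
    (hbound : ∀ T > T₁, (1 / T) * ∫ t in Ioo (-T) T, ‖(t : ℂ) * f t‖ ≤ B) :
    ∀ T > T₁, IntegrableOn (fun t : ℝ => f t / (t : ℂ)) {t : ℝ | T < |t|} ∧
      T * ∫ t in {t : ℝ | T < |t|}, ‖f t / (t : ℂ)‖ ≤ 4 * B := by
  intro T hT
  have hT0 : 0 < T := hT₁.trans hT
  have hle : ∫⁻ t in {t : ℝ | T < |t|}, ‖f t / (t : ℂ)‖ₑ ≤ ENNReal.ofReal (4 * B / T) := by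
    have hgeom : HasSum (fun k : ℕ => 2 * B / (2 ^ k * T)) (4 * B / T) := by
      have h := hasSum_geometric_two.mul_left (2 * B / T)
      rw [show 2 * B / T * 2 = 4 * B / T by ring] at h
      have hterm : (fun k : ℕ => 2 * B / (2 ^ k * T)) =
          fun k : ℕ => 2 * B / T * (1 / 2) ^ k := by
        funext k
        rw [one_div, inv_pow]
        field_simp
      rwa [hterm]
    calc ∫⁻ t in {t : ℝ | T < |t|}, ‖f t / (t : ℂ)‖ₑ
        ≤ ∫⁻ t in ⋃ k : ℕ, {t : ℝ | 2 ^ k * T ≤ |t| ∧ |t| < 2 * (2 ^ k * T)},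
            ‖f t / (t : ℂ)‖ₑ := lintegral_mono_set (subset_iUnion_annulus hT0)
      _ ≤ ∑' k : ℕ, ∫⁻ t in {t : ℝ | 2 ^ k * T ≤ |t| ∧ |t| < 2 * (2 ^ k * T)},
            ‖f t / (t : ℂ)‖ₑ := lintegral_iUnion_le _ _
      _ ≤ ∑' k : ℕ, ENNReal.ofReal (2 * B / (2 ^ k * T)) := by
          refine ENNReal.tsum_le_tsum fun k => ?_
          have hk : (1 : ℝ) ≤ 2 ^ k := one_le_pow₀ one_le_two
          exact lintegral_annulus_le (by positivity) (hloc _ (by positivity))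
            (hbound _ (by nlinarith))
      _ = ENNReal.ofReal (4 * B / T) := by
          rw [← ENNReal.ofReal_tsum_of_nonneg (fun k => by positivity) hgeom.summable,
            hgeom.tsum_eq]
  have hfm : AEStronglyMeasurable f volume := by
    have hcover : (⋃ n : ℕ, Ioo (-((n : ℝ) + 1)) ((n : ℝ) + 1)) = univ := by
      refine eq_univ_of_forall fun t => mem_iUnion.2 ?_
      obtain ⟨n, hn⟩ := exists_nat_gt |t|
      exact ⟨n, abs_lt.1 (hn.trans (lt_add_one _))⟩
    rw [← Measure.restrict_univ (μ := volume), ← hcover, aestronglyMeasurable_iUnion_iff]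
    exact fun n => (hloc _ (by positivity)).aestronglyMeasurable
  have hint : IntegrableOn (fun t : ℝ => f t / (t : ℂ)) {t : ℝ | T < |t|} := by
    refine ⟨?_, hle.trans_lt ENNReal.ofReal_lt_top⟩
    -- Division by `t` is measurable on all of `ℝ`, though not continuous at `0`.
    exact (hfm.aemeasurable.div
      Complex.measurable_ofReal.aemeasurable).aestronglyMeasurable.restrict
  refine ⟨hint, ?_⟩
  rw [← ofReal_integral_norm_eq_lintegral_enorm hint,
    ENNReal.ofReal_le_ofReal_iff (by positivity), le_div_iff₀ hT0] at hle
  linarith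
end
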